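/- Let A ⊆ B(H) and B ⊆ B(K) be unital operator algebras and let T : A → B be a surjective linear isometry. Then T is real positive (a + a* ≥ 0 implies T(a) + T(a)* ≥ 0) if and only if T is a Jordan homomorphism, i.e. T(a·b + b·a) = T(a)·T(b) + T(b)·T(a) for all a, b ∈ A. -/

import Mathlib

/-!
From Jordan to real positive: a surjective Jordan homomorphism is unital, and real positivity of `a` is
detected by the norms of `1 - t a` for small `t > 0` (`re_inner_nonneg_iff_norm`), which a unital
isometry preserves.

From real positive to Jordan: a real positive surjective isometry is unital
(`map_one_of_real_positive`), and a unital surjective isometry `T` preserves squares. For the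
latter, the Möbius map `M z = (z + 1/2)(1 + z/2)⁻¹` is a holomorphic self-map of the closed unit
ball of any unital operator algebra (`norm_mobius_le`), as is `M⁻¹`. Hence `M⁻¹ ∘ T ∘ M ∘ T⁻¹` is a
holomorphic self-map of the ball of `B`, with expansion
`w + (1/2) (w² - T ((T⁻¹ w)²)) + O(‖w‖³)` at `0` (`ballMapJet_conj_mobius`). As in the Cartan
uniqueness theorem, the second order term vanishes: iterating multiplies it by arbitrarily large
constants, while the Cauchy estimate keeps it bounded (`BallMapJet.quadratic_eq_zero`). Polarizing
`T (a²) = (T a)²` gives the Jordan identity.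
-/

set_option maxHeartbeats 1000000
set_option synthInstance.maxHeartbeats 1000000

open ContinuousLinearMap

/-! ### Cartan uniqueness at second order -/

open Asymptotics Filter Topology in
/-- `f` is a holomorphic self-map of the closed unit ball of `E` (differentiable at every point of
it), tangent to the identity at `0` with second order term `Q`. -/
structure BallMapJet {E : Type*} [NormedAddCommGroup E] [NormedSpace ℂ E] (f Q : E → E) :
    Prop where
  diff : ∀ w, ‖w‖ ≤ 1 → DifferentiableAt ℂ f w
  norm_le : ∀ w, ‖w‖ ≤ 1 → ‖f w‖ ≤ 1
  jet : (fun w => f w - w - Q w) =O[𝓝 0] (fun w => ‖w‖ ^ 3)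

namespace BallMapJet

open Asymptotics Filter Topology

variable {E : Type*} [NormedAddCommGroup E] [NormedSpace ℂ E] {f Q : E → E}

/-- The Cauchy estimate: `(f (l • w) - l • w) / l ^ 2` extends holomorphically over `l = 0` with
value `Q w`, and is bounded by `2` on the unit circle. -/
theorem norm_quadratic_le [CompleteSpace E] (h : BallMapJet f Q)
    (hQ : ∀ (l : ℂ) w, Q (l • w) = l ^ 2 • Q w)
    {w : E} (hw : ‖w‖ ≤ 1) : ‖Q w‖ ≤ 2 := by
  classical
  set k : ℂ → E := fun l => (l ^ 2)⁻¹ • (f (l • w) - l • w) with hk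
  set g : ℂ → E := Function.update k 0 (Q w) with hg
  have hgne : ∀ l, l ≠ 0 → g l = k l := fun l hl => by simp [hg, hl]
  have hball : ∀ l : ℂ, ‖l‖ ≤ 1 → ‖l • w‖ ≤ 1 := fun l hl => by
    rw [norm_smul]; exact mul_le_one₀ hl (norm_nonneg _) hw
  have hkd : ∀ l : ℂ, ‖l‖ ≤ 1 → l ≠ 0 → DifferentiableAt ℂ k l := by
    intro l hl h0
    have h1 : DifferentiableAt ℂ (fun l : ℂ => l • w) l := by fun_prop
    have h2 : DifferentiableAt ℂ (fun l : ℂ => f (l • w)) l :=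
      DifferentiableAt.comp l (h.diff _ (hball l hl)) h1
    have h3 : DifferentiableAt ℂ (fun l : ℂ => (l ^ 2)⁻¹) l :=
      (by fun_prop : DifferentiableAt ℂ (fun l : ℂ => l ^ 2) l).inv (pow_ne_zero 2 h0)
    exact h3.smul (h2.sub h1)
  have hgd : ∀ l : ℂ, ‖l‖ ≤ 1 → l ≠ 0 → DifferentiableAt ℂ g l := by
    intro l hl h0
    refine (hkd l hl h0).congr_of_eventuallyEq ?_
    filter_upwards [isOpen_ne.mem_nhds h0] with x hx using hgne x hx
  have hg0 : ContinuousAt g 0 := by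
    rw [hg, continuousAt_update_same]
    have ht : Tendsto (fun l : ℂ => l • w) (𝓝 0) (𝓝 0) := by
      have : Continuous (fun l : ℂ => l • w) := by fun_prop
      simpa using this.tendsto 0
    obtain ⟨C, hC⟩ := (h.jet.comp_tendsto ht).bound
    rw [tendsto_iff_norm_sub_tendsto_zero]
    have hlim : Tendsto (fun l : ℂ => C * ‖w‖ ^ 3 * ‖l‖) (𝓝[≠] 0) (𝓝 0) := by
      have : Continuous (fun l : ℂ => C * ‖w‖ ^ 3 * ‖l‖) := by fun_prop
      simpa using (this.tendsto 0).mono_left nhdsWithin_le_nhds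
    refine squeeze_zero' (Eventually.of_forall fun _ => norm_nonneg _) ?_ hlim
    filter_upwards [nhdsWithin_le_nhds hC, self_mem_nhdsWithin] with l hl h0
    have h0 : l ≠ 0 := h0
    have e : k l - Q w = (l ^ 2)⁻¹ • (f (l • w) - l • w - Q (l • w)) := by
      rw [hQ, smul_sub _ _ (l ^ 2 • Q w), smul_smul, inv_mul_cancel₀ (pow_ne_zero 2 h0), one_smul]
    rw [e, norm_smul, norm_inv, norm_pow]
    have hp : 0 < ‖l‖ := norm_pos_iff.2 h0
    simp only [Function.comp, norm_pow, norm_norm, norm_smul, norm_mul] at hl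
    rw [inv_mul_le_iff₀ (by positivity)]
    calc _ ≤ _ := hl
      _ = _ := by ring
  have hgc : ∀ l : ℂ, ‖l‖ ≤ 1 → ContinuousAt g l := fun l hl => by
    by_cases h0 : l = 0
    · rw [h0]; exact hg0
    · exact (hgd l hl h0).continuousAt
  have hdiff : DifferentiableOn ℂ g (Metric.ball 0 1) := by
    refine (Complex.differentiableOn_compl_singleton_and_continuousAt_iff
      (Metric.ball_mem_nhds (0 : ℂ) one_pos)).1 ⟨?_, hg0⟩
    intro l hl
    exact (hgd l (by simpa using (mem_ball_zero_iff.1 hl.1).le) hl.2).differentiableWithinAt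
  have hcl : DiffContOnCl ℂ g (Metric.ball 0 1) := by
    refine ⟨hdiff, fun l hl => (hgc l ?_).continuousWithinAt⟩
    rw [closure_ball _ one_ne_zero] at hl
    simpa using hl
  have := Complex.norm_le_of_forall_mem_frontier_norm_le Metric.isBounded_ball hcl (C := 2)
    (fun l hl => ?_) (subset_closure (Metric.mem_ball_self (x := (0 : ℂ)) one_pos))
  · simpa [hg] using this
  · rw [frontier_ball _ one_ne_zero] at hl
    have hl1 : ‖l‖ = 1 := by simpa using hl
    have h0 : l ≠ 0 := by rintro rfl; simp at hl1
    rw [hgne l h0, hk]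
    simp only [norm_smul, norm_inv, norm_pow, hl1]
    have h1 := h.norm_le _ (hball l hl1.le)
    have h2 := hball l hl1.le
    have h3 := norm_sub_le (f (l • w)) (l • w)
    linarith

/-- Composing `f` with itself doubles the second order term. -/
theorem comp_self (h : BallMapJet f Q) {C : ℝ}
    (hQ : ∀ u v, ‖Q u - Q v‖ ≤ C * (‖u - v‖ * (‖u‖ + ‖v‖))) (hQ0 : Q 0 = 0) :
    BallMapJet (f ∘ f) (fun w => (2 : ℂ) • Q w) where
  diff w hw := DifferentiableAt.comp w (h.diff _ (h.norm_le w hw)) (h.diff w hw)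
  norm_le w hw := h.norm_le _ (h.norm_le w hw)
  jet := by
    have hid : Tendsto (fun w : E => ‖w‖) (𝓝 0) (𝓝 0) := tendsto_norm_zero
    have hpow : ∀ {m n : ℕ}, n ≤ m → (fun w : E => ‖w‖ ^ m) =O[𝓝 0] (fun w => ‖w‖ ^ n) :=
      fun {m n} hmn => by
        refine IsBigO.of_bound 1 ?_
        filter_upwards [Metric.closedBall_mem_nhds (0 : E) one_pos] with x hx
        have hx : ‖x‖ ≤ 1 := by simpa using hx
        simpa using pow_le_pow_of_le_one (norm_nonneg x) hx hmn
    have hQ2 : Q =O[𝓝 0] (fun w => ‖w‖ ^ 2) := by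
      refine IsBigO.of_bound C (Eventually.of_forall fun w => ?_)
      have := hQ w 0
      simp only [hQ0, sub_zero, norm_zero, add_zero] at this
      simpa [pow_two] using this
    have hsub : (fun w => f w - w) =O[𝓝 0] (fun w => ‖w‖ ^ 2) := by
      have := (h.jet.trans (hpow (by norm_num : 2 ≤ 3))).add hQ2
      refine this.congr_left fun w => by abel
    have hf1 : f =O[𝓝 0] (fun w => ‖w‖) := by
      have h1 : (fun w : E => w) =O[𝓝 0] (fun w => ‖w‖) := (isBigO_refl _ _).norm_right
      have h2 := hsub.trans (hpow (by norm_num : 1 ≤ 2))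
      simp only [pow_one] at h2
      refine (h2.add h1).congr_left fun w => by abel
    have hf0 : Tendsto f (𝓝 0) (𝓝 0) := hf1.trans_tendsto hid
    have a1 : (fun w => f (f w) - f w - Q (f w)) =O[𝓝 0] (fun w => ‖w‖ ^ 3) :=
      (h.jet.comp_tendsto hf0).trans (hf1.norm_left.pow 3)
    have a3 : (fun w => Q (f w) - Q w) =O[𝓝 0] (fun w => ‖w‖ ^ 3) := by
      have b1 : (fun w => Q (f w) - Q w) =O[𝓝 0] (fun w => ‖f w - w‖ * (‖f w‖ + ‖w‖)) := by
        refine IsBigO.of_bound C (Eventually.of_forall fun w => ?_)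
        refine (hQ _ _).trans_eq ?_
        rw [Real.norm_of_nonneg (by positivity)]
      have b2 := hsub.norm_left.mul (hf1.norm_left.add (isBigO_refl (fun w : E => ‖w‖) (𝓝 0)))
      exact (b1.trans b2).congr_right fun w => by ring
    refine ((a1.add h.jet).add a3).congr_left fun w => ?_
    simp only [Function.comp, two_smul]
    abel

/-- The iterates `f^[2 ^ n]` have second order term `2 ^ n • Q`, which stays bounded only if
`Q = 0`. -/
theorem quadratic_eq_zero [CompleteSpace E] (h : BallMapJet f Q) {C : ℝ}
    (hQ : ∀ u v, ‖Q u - Q v‖ ≤ C * (‖u - v‖ * (‖u‖ + ‖v‖)))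
    (hhom : ∀ (l : ℂ) w, Q (l • w) = l ^ 2 • Q w) (w : E) : Q w = 0 := by
  have hQ0 : Q 0 = 0 := by simpa using hhom 0 0
  have key : ∀ n : ℕ, ∃ g : E → E, BallMapJet g (fun w => (2 ^ n : ℂ) • Q w) := by
    intro n
    induction n with
    | zero => exact ⟨f, by simpa using h⟩
    | succ n ih =>
      obtain ⟨g, hg⟩ := ih
      refine ⟨g ∘ g, ?_⟩
      have := hg.comp_self (C := 2 ^ n * C) (fun u v => ?_) (by simp [hQ0])
      · simpa [smul_smul, pow_succ'] using this
      · rw [← smul_sub, norm_smul, mul_assoc, norm_pow, Complex.norm_two]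
        exact mul_le_mul_of_nonneg_left (hQ u v) (by positivity)
  have hunit : ∀ w, ‖w‖ ≤ 1 → Q w = 0 := by
    intro w hw
    by_contra hne
    have hp : 0 < ‖Q w‖ := norm_pos_iff.2 hne
    obtain ⟨n, hn⟩ := pow_unbounded_of_one_lt (2 / ‖Q w‖) (one_lt_two : (1 : ℝ) < 2)
    obtain ⟨g, hg⟩ := key n
    have := hg.norm_quadratic_le (fun l w => by rw [hhom, smul_comm]) hw
    rw [norm_smul, norm_pow, Complex.norm_two] at this
    rw [div_lt_iff₀ hp] at hn
    linarith
  by_cases hw : w = 0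
  · rw [hw, hQ0]
  have hp : 0 < ‖w‖ := norm_pos_iff.2 hw
  have h1 := hunit (((‖w‖⁻¹ : ℝ) : ℂ) • w) (by
    rw [norm_smul, Complex.norm_real, norm_inv, norm_norm, inv_mul_cancel₀ hp.ne'])
  rw [hhom] at h1
  refine (smul_eq_zero.1 h1).resolve_left (pow_ne_zero 2 ?_)
  exact_mod_cast inv_ne_zero hp.ne'

end BallMapJet

/-! ### Möbius maps in a Banach algebra -/

section Mobius

open Asymptotics Filter Topology

variable {R : Type*} [NormedRing R] [NormedAlgebra ℂ R]

/-- The Möbius map `z ↦ (z + 1/2)(1 + z/2)⁻¹`, with denominators cleared. -/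
noncomputable def mobius (z : R) : R := (1 + 2 * z) * Ring.inverse (2 + z)

/-- The Möbius map `v ↦ (v - 1/2)(1 - v/2)⁻¹`, inverse to `mobius`, with denominators cleared. -/
noncomputable def mobiusInv (v : R) : R := -mobius (-v)

variable [CompleteSpace R]

theorem isUnit_two_add {z : R} (hz : ‖z‖ < 2) : IsUnit (2 + z) := by
  have h1 : IsUnit (1 - (-(1 / 2 : ℂ) • z)) := by
    apply isUnit_one_sub_of_norm_lt_one
    rw [norm_smul, norm_neg]
    norm_num
    linarith
  have h2 : (2 + z : R) = algebraMap ℂ R 2 * (1 - (-(1 / 2 : ℂ) • z)) := by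
    rw [← Algebra.smul_def, smul_sub, smul_smul, ← Algebra.algebraMap_eq_smul_one]
    rw [map_ofNat]
    module
  rw [h2]
  exact ((isUnit_iff_ne_zero.2 two_ne_zero).map (algebraMap ℂ R)).mul h1

theorem differentiableAt_mobius {z : R} (hz : ‖z‖ < 2) : DifferentiableAt ℂ (mobius (R := R)) z := by
  obtain ⟨u, hu⟩ := isUnit_two_add hz
  have h1 : DifferentiableAt ℂ (Ring.inverse : R → R) (2 + z) := by
    rw [← hu]; exact differentiableAt_inverse u.isUnit
  have h2 : DifferentiableAt ℂ (fun z : R => Ring.inverse (2 + z)) z :=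
    DifferentiableAt.comp z h1 (by fun_prop)
  exact (by fun_prop : DifferentiableAt ℂ (fun z : R => 1 + 2 * z) z).mul h2

theorem differentiableAt_mobiusInv {z : R} (hz : ‖z‖ < 2) :
    DifferentiableAt ℂ (mobiusInv (R := R)) z := by
  have h : DifferentiableAt ℂ (mobius (R := R)) (-z) := differentiableAt_mobius (by simpa using hz)
  exact (DifferentiableAt.comp z h (by fun_prop : DifferentiableAt ℂ (fun z : R => -z) z)).neg

theorem inverse_two_add_isBigO {z : R} (hz : ‖z‖ < 2) :
    (fun x : R => Ring.inverse (2 + x)) =O[𝓝 z] (fun _ => (1 : ℝ)) := by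
  obtain ⟨u, hu⟩ := isUnit_two_add hz
  have h1 : ContinuousAt (Ring.inverse : R → R) (2 + z) := by
    rw [← hu]; exact NormedRing.inverse_continuousAt u
  have h2 : ContinuousAt (fun x : R => Ring.inverse (2 + x)) z :=
    ContinuousAt.comp h1 (by fun_prop)
  exact h2.tendsto.isBigO_one ℝ

/-- Second order expansion of the Möbius map at `0`. -/
theorem mobius_jet : (fun z : R => mobius z -
    ((1 / 2 : ℂ) • (1 : R) + (3 / 4 : ℂ) • z - (3 / 8 : ℂ) • (z * z))) =O[𝓝 0]
      (fun z => ‖z‖ ^ 3) := by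
  have h1 : (fun z : R => (3 / 8 : ℂ) • (z * z * z) * Ring.inverse (2 + z)) =O[𝓝 0]
      (fun z => ‖z‖ ^ 3) := by
    have hz : (fun z : R => z) =O[𝓝 0] (fun z => ‖z‖) := (isBigO_refl _ _).norm_right
    refine ((((hz.mul hz).mul hz).const_smul_left (3 / 8 : ℂ)).mul
      (inverse_two_add_isBigO (by simp))).congr_right fun z => by ring
  refine h1.congr' ?_ EventuallyEq.rfl
  filter_upwards [Metric.ball_mem_nhds (0 : R) two_pos] with z hz
  have hu := isUnit_two_add (mem_ball_zero_iff.1 hz)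
  have h2 : (1 + 2 * z : R) = ((1 / 2 : ℂ) • (1 : R) + (3 / 4 : ℂ) • z - (3 / 8 : ℂ) • (z * z)) *
      (2 + z) + (3 / 8 : ℂ) • (z * z * z) := by
    have e2 : (2 : R) = (2 : ℂ) • 1 := by rw [← Algebra.algebraMap_eq_smul_one, map_ofNat]
    rw [e2]
    simp only [add_mul, sub_mul, mul_add, smul_mul_assoc, mul_smul_comm, one_mul, mul_one]
    module
  rw [mobius, h2, add_mul, mul_assoc _ (2 + z), Ring.mul_inverse_cancel _ hu, mul_one]
  abel

/-- Second order expansion of the inverse Möbius map at `1/2`. -/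
theorem mobiusInv_jet (hone : ‖(1 : R)‖ ≤ 1) :
    (fun h : R => mobiusInv ((1 / 2 : ℂ) • (1 : R) + h) -
      ((4 / 3 : ℂ) • h + (8 / 9 : ℂ) • (h * h))) =O[𝓝 0] (fun h => ‖h‖ ^ 3) := by
  set c : R := (1 / 2 : ℂ) • (1 : R) with hc
  have hcn : ‖-c‖ < 2 := by
    rw [norm_neg, hc, norm_smul]
    norm_num
    linarith
  have ht : Tendsto (fun h : R => -(c + h)) (𝓝 0) (𝓝 (-c)) := by
    have : Continuous (fun h : R => -(c + h)) := by fun_prop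
    simpa using this.tendsto 0
  have h1 : (fun h : R => (8 / 9 : ℂ) • (h * h * h) * Ring.inverse (2 + -(c + h))) =O[𝓝 0]
      (fun z => ‖z‖ ^ 3) := by
    have hz : (fun z : R => z) =O[𝓝 0] (fun z => ‖z‖) := (isBigO_refl _ _).norm_right
    refine ((((hz.mul hz).mul hz).const_smul_left (8 / 9 : ℂ)).mul
      ((inverse_two_add_isBigO hcn).comp_tendsto ht)).congr_right fun z => by
        simp only [Function.comp]; ring
  refine h1.congr' ?_ EventuallyEq.rfl
  have hev : ∀ᶠ h in 𝓝 (0 : R), ‖-(c + h)‖ < 2 :=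
    ht.eventually ((isOpen_lt continuous_norm continuous_const).mem_nhds hcn)
  filter_upwards [hev] with h hh
  have hu := isUnit_two_add hh
  have h2 : (1 + 2 * -(c + h) : R) = -((4 / 3 : ℂ) • h + (8 / 9 : ℂ) • (h * h)) *
      (2 + -(c + h)) - (8 / 9 : ℂ) • (h * h * h) := by
    have e2 : (2 : R) = (2 : ℂ) • 1 := by rw [← Algebra.algebraMap_eq_smul_one, map_ofNat]
    rw [e2, hc]
    simp only [add_mul, neg_mul, mul_neg, mul_add, smul_mul_assoc, mul_smul_comm, one_mul, mul_one,
      neg_add_rev]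
    module
  rw [mobiusInv, mobius, h2, sub_mul, mul_assoc _ (2 + -(c + h)), Ring.mul_inverse_cancel _ hu,
    mul_one]
  abel

end Mobius

/-! ### Real positivity and Möbius maps for operators -/

section Operator

variable {H : Type*} [NormedAddCommGroup H] [InnerProductSpace ℂ H]

theorem isPositive_add_adjoint_iff [CompleteSpace H] (a : H →L[ℂ] H) :
    (a + adjoint a).IsPositive ↔ ∀ x, 0 ≤ RCLike.re (inner ℂ (a x) x) := by
  have hre : ∀ x, (a + adjoint a).reApplyInnerSelf x = 2 * RCLike.re (inner ℂ (a x) x) := by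
    intro x
    rw [reApplyInnerSelf_apply, add_apply, inner_add_left, adjoint_inner_left, map_add,
      inner_re_symm x (a x)]
    ring
  have hsa : (a + adjoint a).IsSymmetric := by
    have : IsSelfAdjoint (a + adjoint a) := IsSelfAdjoint.add_star_self a
    exact this.isSymmetric
  rw [isPositive_def]
  constructor
  · intro h x
    have := h.2 x
    rw [hre] at this
    linarith
  · intro h
    refine ⟨hsa, fun x => ?_⟩
    rw [hre]
    linarith [h x]

theorem norm_sub_smul_sq (a : H →L[ℂ] H) (t : ℝ) (x : H) :
    ‖((1 : H →L[ℂ] H) - (t : ℂ) • a) x‖ ^ 2 =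
      ‖x‖ ^ 2 - 2 * t * RCLike.re (inner ℂ (a x) x) + t ^ 2 * ‖a x‖ ^ 2 := by
  rw [sub_apply, smul_apply, one_def, id_apply, @norm_sub_sq ℂ, inner_smul_right, norm_smul,
    Complex.norm_real, mul_pow, Real.norm_eq_abs, sq_abs]
  have : RCLike.re ((t : ℂ) * inner ℂ x (a x)) = t * RCLike.re (inner ℂ x (a x)) :=
    RCLike.re_ofReal_mul t _
  rw [this, inner_re_symm x (a x)]
  ring

/-- Real positivity of `a` is detected by the norms of `1 - t a` for `t > 0`; as `t → 0` the bound
forces `Re ⟪a x, x⟫ ≥ 0`. -/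
theorem re_inner_nonneg_iff_norm (a : H →L[ℂ] H) :
    (∀ x, 0 ≤ RCLike.re (inner ℂ (a x) x)) ↔
      ∀ t : ℝ, 0 < t → ‖(1 : H →L[ℂ] H) - (t : ℂ) • a‖ ^ 2 ≤ 1 + t ^ 2 * ‖a‖ ^ 2 := by
  constructor
  · intro h t ht
    have hb : ‖(1 : H →L[ℂ] H) - (t : ℂ) • a‖ ≤ Real.sqrt (1 + t ^ 2 * ‖a‖ ^ 2) := by
      refine opNorm_le_bound _ (Real.sqrt_nonneg _) fun x => ?_
      refine le_of_sq_le_sq ?_ (by positivity)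
      rw [mul_pow, Real.sq_sqrt (by positivity), norm_sub_smul_sq]
      have h1 : ‖a x‖ ^ 2 ≤ ‖a‖ ^ 2 * ‖x‖ ^ 2 := by
        rw [← mul_pow]; exact pow_le_pow_left₀ (norm_nonneg _) (a.le_opNorm x) 2
      have h2 := mul_le_mul_of_nonneg_left h1 (sq_nonneg t)
      have h3 := mul_nonneg ht.le (h x)
      linarith
    calc _ ≤ _ := pow_le_pow_left₀ (norm_nonneg _) hb 2
      _ = _ := Real.sq_sqrt (by positivity)
  · intro h x
    by_contra! hneg
    set r := RCLike.re (inner ℂ (a x) x) with hr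
    set D := ‖a‖ ^ 2 * ‖x‖ ^ 2 with hD
    have hD0 : 0 ≤ D := by positivity
    have key : ∀ t : ℝ, 0 < t → -2 * r ≤ t * D := by
      intro t ht
      have h1 : ‖((1 : H →L[ℂ] H) - (t : ℂ) • a) x‖ ^ 2 ≤ (1 + t ^ 2 * ‖a‖ ^ 2) * ‖x‖ ^ 2 := by
        refine (pow_le_pow_left₀ (norm_nonneg _) (le_opNorm _ x) 2).trans ?_
        rw [mul_pow]
        exact mul_le_mul_of_nonneg_right (h t ht) (sq_nonneg _)
      rw [norm_sub_smul_sq] at h1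
      have h2 : 0 ≤ t ^ 2 * ‖a x‖ ^ 2 := by positivity
      have h3 : t * (-2 * r) ≤ t * (t * D) := by
        rw [hD]; linarith
      exact le_of_mul_le_mul_left h3 ht
    have h1 := key (-r / (D + 1)) (div_pos (by linarith) (by linarith))
    have h2 : -r / (D + 1) * D ≤ -r := by
      rw [div_mul_eq_mul_div, div_le_iff₀ (by linarith)]
      nlinarith
    linarith

/-- The vector inequality behind `norm_mobius_le`. -/
theorem norm_add_two_smul_le {p q : H} (h : ‖q‖ ≤ ‖p‖) :
    ‖p + (2 : ℂ) • q‖ ≤ ‖(2 : ℂ) • p + q‖ := by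
  refine le_of_sq_le_sq ?_ (norm_nonneg _)
  rw [@norm_add_sq ℂ, @norm_add_sq ℂ, inner_smul_right, inner_smul_left, norm_smul, norm_smul,
    Complex.conj_ofNat, Complex.norm_two]
  have := pow_le_pow_left₀ (norm_nonneg q) h 2
  nlinarith

/-- The Möbius map preserves the closed unit ball of an operator algebra:
`(2 + z)⋆(2 + z) - (1 + 2z)⋆(1 + 2z) = 3 (1 - z⋆z)`. -/
theorem norm_mobius_le (A : Subalgebra ℂ (H →L[ℂ] H)) [CompleteSpace A] {z : A} (hz : ‖z‖ ≤ 1) :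
    ‖mobius z‖ ≤ 1 := by
  change ‖((mobius z : A) : H →L[ℂ] H)‖ ≤ 1
  refine opNorm_le_bound _ zero_le_one fun y => ?_
  have hu := isUnit_two_add (hz.trans_lt one_lt_two)
  set i : A := Ring.inverse (2 + z) with hi
  set x : H := (i : H →L[ℂ] H) y with hx
  have hzx : ‖(z : H →L[ℂ] H) x‖ ≤ ‖x‖ := by
    refine (le_opNorm _ x).trans ?_
    exact mul_le_of_le_one_left (norm_nonneg _) hz
  have e2 : (2 : A) = (2 : ℂ) • 1 := by rw [← Algebra.algebraMap_eq_smul_one, map_ofNat]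
  have hy : (2 : ℂ) • x + (z : H →L[ℂ] H) x = y := by
    have h1 : (2 + z) * i = 1 := Ring.mul_inverse_cancel _ hu
    rw [e2] at h1
    have h2 := congrArg (fun b : A => (b : H →L[ℂ] H) y) h1
    simpa using h2
  have hm : ((mobius z : A) : H →L[ℂ] H) y = x + (2 : ℂ) • (z : H →L[ℂ] H) x := by
    have h1 : (mobius z : A) = (1 + (2 : ℂ) • z) * i := by
      rw [mobius, e2, smul_mul_assoc, one_mul, ← e2]
    rw [h1]
    simp [hx]
  rw [hm, one_mul]
  calc _ ≤ _ := norm_add_two_smul_le hzx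
    _ = _ := by rw [hy]

theorem norm_one_subalgebra_le (A : Subalgebra ℂ (H →L[ℂ] H)) : ‖(1 : A)‖ ≤ 1 :=
  opNorm_le_bound _ zero_le_one fun x => by simp

end Operator

/-! ### Unital isometries preserve squares -/

section Isometry

open Asymptotics Filter Topology

section Algebra

variable {R S : Type*} [NormedRing R] [NormedAlgebra ℂ R] [CompleteSpace R]
  [NormedRing S] [NormedAlgebra ℂ S] [CompleteSpace S]

/-- Conjugating the Möbius map by `E` and composing with the inverse Möbius map yields a
holomorphic self-map of the ball which measures the failure of `E` to preserve squares. -/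
theorem ballMapJet_conj_mobius (E : R ≃ₗᵢ[ℂ] S) (hE : E 1 = 1)
    (hone : ‖(1 : S)‖ ≤ 1) (hR : ∀ z : R, ‖z‖ ≤ 1 → ‖mobius z‖ ≤ 1)
    (hS : ∀ z : S, ‖z‖ ≤ 1 → ‖mobius z‖ ≤ 1) :
    BallMapJet (fun w : S => mobiusInv (E (mobius (E.symm w))))
      (fun w : S => (1 / 2 : ℂ) • (w * w - E (E.symm w * E.symm w))) where
  diff w hw := by
    have hz : ‖E.symm w‖ ≤ 1 := by rwa [E.symm.norm_map]
    have h1 : DifferentiableAt ℂ (fun w : S => E.symm w) w :=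
      E.symm.toContinuousLinearEquiv.differentiableAt
    have h2 : DifferentiableAt ℂ (fun w : S => mobius (E.symm w)) w :=
      DifferentiableAt.comp w (differentiableAt_mobius (hz.trans_lt one_lt_two)) h1
    have h3 : DifferentiableAt ℂ (fun w : S => E (mobius (E.symm w))) w :=
      DifferentiableAt.comp w (E.toContinuousLinearEquiv.differentiableAt) h2
    refine DifferentiableAt.comp (g := mobiusInv) w (differentiableAt_mobiusInv ?_) h3
    rw [E.norm_map]
    exact (hR _ hz).trans_lt one_lt_two
  norm_le w hw := by
    rw [mobiusInv, norm_neg]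
    refine hS _ ?_
    rw [norm_neg, E.norm_map]
    exact hR _ (by rwa [E.symm.norm_map])
  jet := by
    set h : S → S := fun w => E (mobius (E.symm w)) - (1 / 2 : ℂ) • 1 with hh
    set r : S → S := fun w => h w - ((3 / 4 : ℂ) • w - (3 / 8 : ℂ) • E (E.symm w * E.symm w))
      with hr
    have hid : (fun w : S => w) =O[𝓝 0] (fun w => ‖w‖) := (isBigO_refl _ _).norm_right
    have hsymm : (fun w : S => E.symm w) =O[𝓝 0] (fun w => ‖w‖) :=
      IsBigO.of_bound 1 (Eventually.of_forall fun w => by simp)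
    have ht : Tendsto (fun w : S => E.symm w) (𝓝 0) (𝓝 0) := by
      simpa using E.symm.continuous.tendsto 0
    have hr3 : r =O[𝓝 0] (fun w => ‖w‖ ^ 3) := by
      have h1 := mobius_jet.comp_tendsto ht
      refine (IsBigO.trans (IsBigO.of_bound 1 (Eventually.of_forall fun w => ?_)) h1).congr_right
        fun w => by simp
      rw [one_mul, Function.comp, ← E.norm_map]
      refine le_of_eq (congrArg _ ?_)
      simp only [hr, hh, map_sub, map_add, map_smul, hE, E.apply_symm_apply]
      abel
    have hpow : ∀ {m n : ℕ}, n ≤ m → (fun w : S => ‖w‖ ^ m) =O[𝓝 0] (fun w => ‖w‖ ^ n) :=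
      fun {m n} hmn => by
        refine IsBigO.of_bound 1 ?_
        filter_upwards [Metric.closedBall_mem_nhds (0 : S) one_pos] with x hx
        have hx : ‖x‖ ≤ 1 := by simpa using hx
        simpa using pow_le_pow_of_le_one (norm_nonneg x) hx hmn
    have hsq : (fun w : S => E (E.symm w * E.symm w)) =O[𝓝 0] (fun w => ‖w‖ ^ 2) := by
      refine (IsBigO.trans (IsBigO.of_bound 1 (Eventually.of_forall fun w => ?_))
        (hsymm.mul hsymm)).congr_right fun w => by ring
      rw [one_mul, E.norm_map]
    have hd : (fun w => h w - (3 / 4 : ℂ) • w) =O[𝓝 0] (fun w => ‖w‖ ^ 2) := by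
      refine ((hr3.trans (hpow (by norm_num : 2 ≤ 3))).sub
        (hsq.const_smul_left (3 / 8 : ℂ))).congr_left fun w => ?_
      simp only [hr, Pi.smul_apply]; abel
    have hh1 : h =O[𝓝 0] (fun w => ‖w‖) := by
      have h2 := hd.trans (hpow (by norm_num : 1 ≤ 2))
      simp only [pow_one] at h2
      exact (h2.add (hid.const_smul_left (3 / 4 : ℂ))).congr_left fun w => by simp
    have hh0 : Tendsto h (𝓝 0) (𝓝 0) := hh1.trans_tendsto tendsto_norm_zero
    have a1 := ((mobiusInv_jet hone).comp_tendsto hh0).trans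
      (hh1.norm_left.pow 3)
    have a2 : (fun w => h w * (h w - (3 / 4 : ℂ) • w) + (h w - (3 / 4 : ℂ) • w) *
        ((3 / 4 : ℂ) • w)) =O[𝓝 0] (fun w => ‖w‖ ^ 3) :=
      ((hh1.mul hd).congr_right fun w => by ring).add
        ((hd.mul (hid.const_smul_left (3 / 4 : ℂ))).congr_right fun w => by ring)
    refine ((a1.add (hr3.const_smul_left (4 / 3 : ℂ))).add
      (a2.const_smul_left (8 / 9 : ℂ))).congr_left fun w => ?_
    have e : (1 / 2 : ℂ) • (1 : S) + h w = E (mobius (E.symm w)) := by simp [hh]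
    simp only [Function.comp, e, hr, Pi.smul_apply]
    simp only [mul_sub, sub_mul, smul_mul_assoc, mul_smul_comm]
    module

/-- A unital surjective isometry preserves squares, provided the Möbius map preserves both unit
balls. -/
theorem map_mul_self_of_unital (E : R ≃ₗᵢ[ℂ] S) (hE : E 1 = 1)
    (hone : ‖(1 : S)‖ ≤ 1) (hR : ∀ z : R, ‖z‖ ≤ 1 → ‖mobius z‖ ≤ 1)
    (hS : ∀ z : S, ‖z‖ ≤ 1 → ‖mobius z‖ ≤ 1) (a : R) : E (a * a) = E a * E a := by
  have h := (ballMapJet_conj_mobius E hE hone hR hS).quadratic_eq_zero (C := 1) (fun u v => ?_)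
    (fun l w => ?_) (E a)
  · rw [E.symm_apply_apply] at h
    have := (smul_eq_zero.1 h).resolve_left (by norm_num)
    exact (sub_eq_zero.1 this).symm
  · have e : (1 / 2 : ℂ) • (u * u - E (E.symm u * E.symm u)) -
        (1 / 2 : ℂ) • (v * v - E (E.symm v * E.symm v)) =
        (1 / 2 : ℂ) • ((u * (u - v) + (u - v) * v) -
          E (E.symm u * E.symm (u - v) + E.symm (u - v) * E.symm v)) := by
      rw [← smul_sub, map_sub E.symm, mul_sub, sub_mul, mul_sub, sub_mul]
      simp only [map_sub, map_add]
      congr 1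
      abel
    rw [e, norm_smul]
    have n1 : ‖u * (u - v) + (u - v) * v‖ ≤ ‖u - v‖ * (‖u‖ + ‖v‖) := by
      refine (norm_add_le _ _).trans ((add_le_add (norm_mul_le _ _) (norm_mul_le _ _)).trans_eq ?_)
      ring
    have n2 : ‖E (E.symm u * E.symm (u - v) + E.symm (u - v) * E.symm v)‖ ≤
        ‖u - v‖ * (‖u‖ + ‖v‖) := by
      rw [E.norm_map]
      refine (norm_add_le _ _).trans ((add_le_add (norm_mul_le _ _) (norm_mul_le _ _)).trans_eq ?_)
      simp only [E.symm.norm_map]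
      ring
    have n3 := norm_sub_le (u * (u - v) + (u - v) * v)
      (E (E.symm u * E.symm (u - v) + E.symm (u - v) * E.symm v))
    have : ‖(1 / 2 : ℂ)‖ = 1 / 2 := by norm_num
    rw [this]
    linarith
  · simp only [map_smul, smul_mul_assoc, mul_smul_comm]
    module

end Algebra

variable {H K : Type*} [NormedAddCommGroup H] [InnerProductSpace ℂ H]
  [NormedAddCommGroup K] [InnerProductSpace ℂ K]
  {A : Subalgebra ℂ (H →L[ℂ] H)} {B : Subalgebra ℂ (K →L[ℂ] K)}

/-- A real positive surjective isometry is unital: applying it to `1 - c`, where `T c = 1`, gives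
`Re (T 1) ≥ 1`, and a contraction with this property is the identity. -/
theorem map_one_of_real_positive (T : A →ₗ[ℂ] B) (hsurj : Function.Surjective T)
    (hiso : ∀ a : A, ‖(T a : K →L[ℂ] K)‖ = ‖(a : H →L[ℂ] H)‖)
    (hpos : ∀ a : A, (∀ x, 0 ≤ RCLike.re (inner ℂ ((a : H →L[ℂ] H) x) x)) →
      ∀ y, 0 ≤ RCLike.re (inner ℂ ((T a : K →L[ℂ] K) y) y)) : T 1 = 1 := by
  obtain ⟨c, hTc⟩ := hsurj 1
  have hc : ‖(c : H →L[ℂ] H)‖ ≤ 1 := by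
    rw [← hiso, hTc]; exact norm_one_subalgebra_le B
  have hu : ‖(T 1 : K →L[ℂ] K)‖ ≤ 1 := by
    rw [hiso]; exact norm_one_subalgebra_le A
  have h1 := hpos (1 - c) fun x => by
    have e : ((1 - c : A) : H →L[ℂ] H) x = x - (c : H →L[ℂ] H) x := by simp
    rw [e, inner_sub_left, map_sub, inner_self_eq_norm_sq]
    have i1 := re_inner_le_norm (𝕜 := ℂ) ((c : H →L[ℂ] H) x) x
    have i2 : ‖(c : H →L[ℂ] H) x‖ ≤ ‖x‖ :=
      (le_opNorm _ x).trans (mul_le_of_le_one_left (norm_nonneg _) hc)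
    nlinarith [norm_nonneg x]
  apply Subtype.ext
  ext y
  have h2 := h1 y
  have e : ((T (1 - c) : B) : K →L[ℂ] K) y = (T 1 : K →L[ℂ] K) y - y := by
    rw [map_sub, hTc]; simp
  rw [e, inner_sub_left, map_sub, inner_self_eq_norm_sq] at h2
  have i2 : ‖(T 1 : K →L[ℂ] K) y‖ ≤ ‖y‖ :=
    (le_opNorm _ y).trans (mul_le_of_le_one_left (norm_nonneg _) hu)
  have h3 : ‖(T 1 : K →L[ℂ] K) y - y‖ ^ 2 ≤ 0 := by
    rw [@norm_sub_sq ℂ]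
    nlinarith [norm_nonneg ((T 1 : K →L[ℂ] K) y)]
  have h4 : ‖(T 1 : K →L[ℂ] K) y - y‖ = 0 :=
    pow_eq_zero_iff two_ne_zero |>.1 (le_antisymm h3 (sq_nonneg _))
  simpa using sub_eq_zero.1 (norm_eq_zero.1 h4)

end Isometry

/-- A surjective linear isometry between unital operator algebras is real positive
if and only if it is a Jordan homomorphism. -/
theorem stmt_9 {H K : Type*} [NormedAddCommGroup H] [InnerProductSpace ℂ H] [CompleteSpace H]
    [NormedAddCommGroup K] [InnerProductSpace ℂ K] [CompleteSpace K]
    (A : Subalgebra ℂ (H →L[ℂ] H)) (hA : IsClosed (A : Set (H →L[ℂ] H)))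
    (B : Subalgebra ℂ (K →L[ℂ] K)) (hB : IsClosed (B : Set (K →L[ℂ] K)))
    (T : A →ₗ[ℂ] B) (hsurj : Function.Surjective T)
    (hiso : ∀ a : A, ‖(T a : K →L[ℂ] K)‖ = ‖(a : H →L[ℂ] H)‖) :
    (∀ a : A, ((a : H →L[ℂ] H) + adjoint (a : H →L[ℂ] H)).IsPositive →
        ((T a : K →L[ℂ] K) + adjoint (T a : K →L[ℂ] K)).IsPositive) ↔
      ∀ a b : A, T (a * b + b * a) = T a * T b + T b * T a := by
  have : CompleteSpace A := hA.completeSpace_coe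
  have : CompleteSpace B := hB.completeSpace_coe
  let E : A ≃ₗᵢ[ℂ] B := LinearIsometryEquiv.ofSurjective ⟨T, hiso⟩ hsurj
  have hET : ∀ a, E a = T a := fun _ => rfl
  simp only [isPositive_add_adjoint_iff]
  constructor
  · intro hpos a b
    have hsq := map_mul_self_of_unital E
      (map_one_of_real_positive T hsurj hiso hpos) (norm_one_subalgebra_le B)
      (fun z hz => norm_mobius_le A hz) (fun z hz => norm_mobius_le B hz)
    simp only [hET] at hsq
    have h := hsq (a + b)
    simp only [add_mul, mul_add, map_add, hsq a, hsq b] at h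
    rw [map_add]
    have e : T (a * b) + T (b * a) - (T a * T b + T b * T a) = 0 := by
      rw [← sub_eq_zero] at h
      rw [← h]; abel
    exact sub_eq_zero.1 e
  · intro hJ a ha
    obtain ⟨c, hc⟩ := hsurj 1
    -- `T 1` is a unit for the Jordan product of `B`, so it equals `1`.
    have hone : T 1 = 1 := by
      have h := hJ 1 c
      rw [one_mul, mul_one, hc, one_mul, mul_one, map_add, hc, ← two_smul ℂ, ← two_smul ℂ] at h
      exact (smul_right_injective B (two_ne_zero : (2 : ℂ) ≠ 0) h).symm
    rw [re_inner_nonneg_iff_norm] at ha ⊢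
    intro t ht
    have h := ha t ht
    have e : T (1 - (t : ℂ) • a) = 1 - (t : ℂ) • T a := by rw [map_sub, map_smul, hone]
    have h2 := hiso (1 - (t : ℂ) • a)
    rw [e] at h2
    rw [hiso a]
    have h3 : ‖(1 : K →L[ℂ] K) - (t : ℂ) • (T a : K →L[ℂ] K)‖ =
      ‖(1 : H →L[ℂ] H) - (t : ℂ) • (a : H →L[ℂ] H)‖ := h2
    rw [h3]
    exact h
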